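/- arXiv:2411.01577 — 2 statements merged into one kernel-verified Lean document; each statement's English description precedes it below -/
import Mathlib

section
/- For every 1 ≤ p ≤ ∞ there exist a constant C_p and a nonnegative Schwartz function w on ℝ² with w ≥ 1 on B(0,1) (both independent of λ and f), such that for every N ∈ ℕ there is C_N with: for all λ ≥ 1 and all integrable f supported in (0,1), sup_{x ∈ B(0,1)} |T^λ f(x)| ≤ C_p (∫_{ℝ²} |T^λ f(y)|^p w(y) dy)^{1/p} + C_N λ^{−N} ‖f‖_{L¹}. -/
open MeasureTheory Metric Set

noncomputable section

abbrev ℝ2 : Type := EuclideanSpace ℝ (Fin 2)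

/-- The point `(a, b)` of the plane. -/
def pt (a b : ℝ) : ℝ2 := !₂[a, b]

/-- The oscillatory integral operator `T^λ` with phase `φ^λ(x,ξ) = λ φ(x/λ, ξ)` and
amplitude `a^λ(x,ξ) = a(x/λ, ξ)`. -/
def Tlam (φ a : ℝ2 → ℝ → ℝ) (lam : ℝ) (f : ℝ → ℂ) (x : ℝ2) : ℂ :=
  ∫ ξ : ℝ, Complex.exp (Complex.I * ((lam * φ (lam⁻¹ • x) ξ : ℝ) : ℂ)) *
    ((a (lam⁻¹ • x) ξ : ℝ) : ℂ) * f ξ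

/-- `φ` is a phase of reduced form with amplitude `a`, profile `h`, error `E`,
parameters `Npar` (order of controlled derivatives), `cpar` (smallness of `E`) and
derivative bounds `Cab`. -/
structure IsReducedForm (Npar : ℕ) (cpar : ℝ) (Cab : ℕ → ℝ)
    (a φ : ℝ2 → ℝ → ℝ) (h : ℝ → ℝ) (E : ℝ2 → ℝ → ℝ) : Prop where
  a_smooth : ContDiff ℝ (⊤ : ℕ∞) fun p : ℝ2 × ℝ => a p.1 p.2
  φ_smooth : ContDiff ℝ (⊤ : ℕ∞) fun p : ℝ2 × ℝ => φ p.1 p.2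
  h_smooth : ContDiff ℝ (⊤ : ℕ∞) h
  E_smooth : ContDiff ℝ (⊤ : ℕ∞) fun p : ℝ2 × ℝ => E p.1 p.2
  a_supp : ∀ x ξ, a x ξ ≠ 0 → ‖x‖ < 1 ∧ ξ ∈ Set.Ioo (0 : ℝ) 1
  decomp : ∀ x ξ, a x ξ ≠ 0 → φ x ξ = x 0 * ξ + x 1 * h ξ + E x ξ
  h_zero : h 0 = 0
  h_deriv_zero : deriv h 0 = 0
  h_second : ∀ ξ : ℝ, 1 / 2 ≤ |iteratedDeriv 2 h ξ| ∧ |iteratedDeriv 2 h ξ| ≤ 2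
  E_zero_right : ∀ x, E x 0 = 0
  E_deriv_zero_right : ∀ x, deriv (fun ξ => E x ξ) 0 = 0
  E_zero_left : ∀ ξ, E 0 ξ = 0
  E_fderiv_zero_left : ∀ ξ, fderiv ℝ (fun x => E x ξ) 0 = 0
  φ_bound : ∀ n ≤ Npar, ∀ p : ℝ2 × ℝ, a p.1 p.2 ≠ 0 →
    ‖iteratedFDeriv ℝ n (fun q : ℝ2 × ℝ => φ q.1 q.2) p‖ ≤ Cab n
  E_bound : ∀ n ≤ Npar, ∀ p : ℝ2 × ℝ,
    ‖iteratedFDeriv ℝ n (fun q : ℝ2 × ℝ => E q.1 q.2) p‖ ≤ cpar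

/-- `H` is an `s`-dimensional weight on the plane, with constant `A`. -/
def IsWeight (s A : ℝ) (H : ℝ2 → ℝ) : Prop :=
  Measurable H ∧ (∀ x, H x ∈ Set.Icc (0 : ℝ) 1) ∧
    ∀ x₀ : ℝ2, ∀ R : ℝ, 1 ≤ R → (∫ x in Metric.ball x₀ R, H x) ≤ A * R ^ s

open scoped ENNReal

section helpers
open scoped FourierTransform SchwartzMap Real

lemma eta_exists (R : ℝ) (hR : 0 < R) : ∃ η : 𝓢(ℝ2, ℂ), ∀ ω : ℝ2, ‖ω‖ < R →
    (∫ y, Complex.exp (((-2 * π * inner ℝ y ω : ℝ) : ℂ) * Complex.I) * η y = 1) ∧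
    ∀ k : ℕ, k ≠ 0 → ∀ L : ContinuousMultilinearMap ℝ (fun _ : Fin k => ℝ2) ℂ,
      ∫ y, Complex.exp (((-2 * π * inner ℝ y ω : ℝ) : ℂ) * Complex.I) * η y * L (fun _ => y)
        = 0 := by
  let b : ContDiffBump (0 : ℝ2) := ⟨R, R + 1, hR, by linarith⟩
  have hbs : HasCompactSupport (fun x => ((b x : ℝ) : ℂ)) :=
    b.hasCompactSupport.comp_left (g := fun r : ℝ => (r : ℂ)) (by simp)
  have hbc : ContDiff ℝ (⊤ : ℕ∞) (fun x => ((b x : ℝ) : ℂ)) :=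
    Complex.ofRealCLM.contDiff.comp b.contDiff
  let B : 𝓢(ℝ2, ℂ) := hbs.toSchwartzMap hbc
  refine ⟨𝓕⁻ B, fun ω hω => ?_⟩
  set η := 𝓕⁻ B with hη
  have hF : 𝓕 (η : ℝ2 → ℂ) = fun x => ((b x : ℝ) : ℂ) := by
    rw [← SchwartzMap.fourier_coe, hη, FourierTransform.fourier_fourierInv_eq]
    rfl
  have hev : 𝓕 (η : ℝ2 → ℂ) =ᶠ[nhds ω] fun _ => (1 : ℂ) := by
    rw [hF]
    filter_upwards [isOpen_ball.mem_nhds (show ω ∈ ball (0 : ℝ2) R by simpa using hω)] with x hx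
    have := b.one_of_mem_closedBall (ball_subset_closedBall hx)
    simp [this]
  have hint : ∀ k : ℕ, Integrable (fun v => ‖v‖ ^ k * ‖η v‖) := fun k =>
    η.integrable_pow_mul volume k
  refine ⟨?_, fun k hk L => ?_⟩
  · have := hev.self_of_nhds
    rw [Real.fourier_eq'] at this
    simpa using this
  · have hmono : ∀ r : Fin k → Fin 2,
        ∫ y : ℝ2, Complex.exp (((-2 * π * inner ℝ y ω : ℝ) : ℂ) * Complex.I) * η y *
          ((∏ i, y (r i) : ℝ) : ℂ) = 0 := by
      intro r
      have h0 : iteratedFDeriv ℝ k (𝓕 (η : ℝ2 → ℂ)) ω = 0 := by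
        rw [hev.iteratedFDeriv ℝ k |>.self_of_nhds, iteratedFDeriv_const_of_ne hk]
        rfl
      rw [Real.iteratedFDeriv_fourier (N := ⊤) (fun n _ => hint n)
        η.continuous.aestronglyMeasurable le_top, Real.fourier_eq'] at h0
      have h1 := congrArg (fun M => M (fun i => EuclideanSpace.single (r i) (1 : ℝ))) h0
      rw [← ContinuousMultilinearMap.apply_apply (𝕜 := ℝ) , ← ContinuousLinearMap.integral_comp_comm] at h1
      · have hc : (-(2 * π * Complex.I : ℂ)) ^ k ≠ 0 := by
          apply pow_ne_zero
          simp [Real.pi_ne_zero]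
        refine (mul_eq_zero.1 ?_).resolve_left hc
        rw [← integral_const_mul]
        refine Eq.trans (integral_congr_ae (ae_of_all _ fun y => ?_)) h1
        have hin : ∀ j : Fin 2, (innerSL ℝ y) (EuclideanSpace.single j (1 : ℝ)) = y j := by
          intro j
          refine (innerSL_apply_apply ℝ y _).trans ?_
          simp [EuclideanSpace.inner_single_right]
        simp only [ContinuousMultilinearMap.apply_apply, smul_apply,
          VectorFourier.fourierPowSMulRight_apply, smul_eq_mul, Complex.real_smul]
        simp_rw [hin]
        ring
      · refine ((hint k).const_mul ((2 * π * ‖innerSL ℝ (E := ℝ2)‖) ^ k)).mono' ?_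
          (ae_of_all _ fun y => ?_)
        · refine Continuous.aestronglyMeasurable (Continuous.smul
            (f := fun y : ℝ2 => Complex.exp (((-2 * π * inner ℝ y ω : ℝ) : ℂ) * Complex.I))
            (by fun_prop) ?_)
          exact η.continuous.fourierPowSMulRight _ k
        · rw [norm_smul, Complex.norm_exp_ofReal_mul_I, one_mul]
          refine (VectorFourier.norm_fourierPowSMulRight_le _ _ _ _).trans (le_of_eq ?_)
          ring
    have hexp : ∀ y : ℝ2, L (fun _ => y) = ∑ r : Fin k → Fin 2, 
        ((∏ i, y (r i) : ℝ) : ℂ) * L (fun i => EuclideanSpace.single (r i) (1 : ℝ)) := by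
      intro y
      have hy : y = ∑ j, y j • EuclideanSpace.single j (1 : ℝ) := by
        ext i
        fin_cases i <;> simp
      conv_lhs => rw [hy]
      rw [L.map_sum (fun (_ : Fin k) j => y j • EuclideanSpace.single j (1 : ℝ))]
      refine Finset.sum_congr rfl fun r _ => ?_
      rw [L.map_smul_univ (fun i => y (r i))]
      simp
    simp_rw [hexp, Finset.mul_sum]
    rw [integral_finsetSum]
    · refine Finset.sum_eq_zero fun r _ => ?_
      simp_rw [← mul_assoc]
      rw [integral_mul_const, hmono, zero_mul]
    · intro r _
      simp_rw [← mul_assoc]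
      refine Integrable.mul_const ?_ _
      refine (hint k).mono' (by fun_prop) (ae_of_all _ fun y => ?_)
      rw [norm_mul, norm_mul, Complex.norm_exp_ofReal_mul_I, one_mul, mul_comm, Complex.norm_real]
      gcongr
      rw [norm_prod]
      calc _ ≤ ∏ i : Fin k, ‖y‖ := Finset.prod_le_prod (fun _ _ => norm_nonneg _)
              (fun i _ => PiLp.norm_apply_le y (r i))
        _ = _ := by simp

lemma bdd_iter {V F : Type*} [NormedAddCommGroup V] [NormedSpace ℝ V] 
    [NormedAddCommGroup F] [NormedSpace ℝ F]
    {G : V → F} (hc : ContDiff ℝ (⊤ : ℕ∞) G) (hs : HasCompactSupport G) (n : ℕ) :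
    ∃ M : ℝ, 1 ≤ M ∧ ∀ x, ‖iteratedFDeriv ℝ n G x‖ ≤ M := by
  obtain ⟨C, hC⟩ := (hs.iteratedFDeriv (𝕜 := ℝ) n).exists_bound_of_continuous
    (hc.continuous_iteratedFDeriv (by exact_mod_cast le_top))
  exact ⟨max 1 C, le_max_left _ _, fun x => (hC x).trans (le_max_right _ _)⟩

lemma majorant (η : 𝓢(ℝ2, ℂ)) : ∃ w : 𝓢(ℝ2, ℝ), (∀ y, 0 ≤ w y) ∧
    (∀ y ∈ ball (0 : ℝ2) 1, 1 ≤ w y) ∧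
    ∀ x ∈ ball (0 : ℝ2) 1, ∀ y, ‖η (x - y)‖ ≤ w y := by
  let b : ContDiffBump (0 : ℝ2) := ⟨1, 2, one_pos, one_lt_two⟩
  let S : ℕ → Set ℝ := fun k => (fun z : ℝ2 => ‖η z‖) '' {z | (k : ℝ) ≤ ‖z‖ + 1}
  let m : ℕ → ℝ := fun k => sSup (S k) + if k = 0 then 1 else 0
  have hdec : ∀ j : ℕ, ∃ C : ℝ, 0 ≤ C ∧ ∀ z : ℝ2, (‖z‖ + 2) ^ j * ‖η z‖ ≤ C := by
    intro j
    obtain ⟨C0, hC0p, h0⟩ := η.decay 0 0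
    obtain ⟨C1, hC1p, h1⟩ := η.decay j 0
    have hC0 : 0 ≤ C0 := hC0p.le
    have hC1 : 0 ≤ C1 := hC1p.le
    refine ⟨2 ^ (j - 1) * (C1 + 2 ^ j * C0), by positivity, fun z => ?_⟩
    have h0' := h0 z
    have h1' := h1 z
    simp only [norm_iteratedFDeriv_zero, pow_zero, one_mul] at h0' h1'
    calc (‖z‖ + 2) ^ j * ‖η z‖ ≤ (2 ^ (j - 1) * (‖z‖ ^ j + 2 ^ j)) * ‖η z‖ := by
          gcongr
          exact add_pow_le (norm_nonneg _) (by norm_num) j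
      _ = 2 ^ (j - 1) * (‖z‖ ^ j * ‖η z‖ + 2 ^ j * ‖η z‖) := by ring
      _ ≤ _ := by gcongr
  have hbdd : ∀ k, BddAbove (S k) := by
    intro k
    obtain ⟨C, _, hC⟩ := hdec 0
    refine ⟨C, ?_⟩
    rintro _ ⟨z, _, rfl⟩
    simpa using hC z
  have hS0 : ∀ k, 0 ≤ sSup (S k) := fun k => Real.sSup_nonneg (by
    rintro _ ⟨z, _, rfl⟩
    exact norm_nonneg _)
  have hm0 : ∀ k, 0 ≤ m k := fun k => add_nonneg (hS0 k) (by split_ifs <;> norm_num)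
  have hm : ∀ j : ℕ, ∃ C : ℝ, 0 ≤ C ∧ ∀ k : ℕ, ((k : ℝ) + 1) ^ j * m k ≤ C := by
    intro j
    obtain ⟨C, hC0, hC⟩ := hdec j
    refine ⟨C + 1, by positivity, fun k => ?_⟩
    have h1 : sSup (S k) ≤ C / ((k : ℝ) + 1) ^ j := by
      refine Real.sSup_le ?_ (by positivity)
      rintro _ ⟨z, hz, rfl⟩
      rw [le_div_iff₀ (by positivity), mul_comm]
      refine le_trans ?_ (hC z)
      have : (k : ℝ) ≤ ‖z‖ + 1 := hz
      refine mul_le_mul_of_nonneg_right (pow_le_pow_left₀ (by positivity) ?_ j) (norm_nonneg _)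
      linarith
    rw [le_div_iff₀ (by positivity)] at h1
    simp only [m]
    split_ifs with hk
    · subst hk
      simp at h1 ⊢
      linarith
    · linarith
  -- summability
  have hsum : ∀ j : ℕ, Summable fun k : ℕ => ((k : ℝ) + 1) ^ j * m k := by
    intro j
    obtain ⟨C, hC0, hC⟩ := hm (j + 2)
    have hs : Summable fun k : ℕ => C * (1 / ((k : ℝ) + 1) ^ 2) := by
      refine Summable.mul_left _ ?_
      have := (summable_nat_add_iff 1).2 (Real.summable_one_div_nat_pow.2 one_lt_two)
      simpa using this
    refine Summable.of_nonneg_of_le (fun k => mul_nonneg (by positivity) (hm0 k)) (fun k => ?_) hs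
    rw [mul_one_div, le_div_iff₀ (by positivity)]
    refine le_trans (le_of_eq ?_) (hC k)
    ring
  choose M hM1 hM using fun n => bdd_iter (b.contDiff (n := (⊤ : ℕ∞))) b.hasCompactSupport n
  let g : ℕ → ℝ2 → ℝ := fun k y => m k * b (((k : ℝ) + 1)⁻¹ • y)
  have hgc : ∀ k, ContDiff ℝ (⊤ : ℕ∞) (g k) := fun k =>
    contDiff_const.mul (b.contDiff.comp (contDiff_const_smul _))
  have hgb : ∀ (n k : ℕ) (y : ℝ2), ‖iteratedFDeriv ℝ n (g k) y‖ ≤ m k * M n := by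
    intro n k y
    have h1 : iteratedFDeriv ℝ n (g k) y =
        m k • iteratedFDeriv ℝ n (fun y => b (((k : ℝ) + 1)⁻¹ • y)) y :=
      iteratedFDeriv_const_smul_apply (f := fun y => b (((k : ℝ) + 1)⁻¹ • y)) (a := m k)
        ((b.contDiff.comp (contDiff_const_smul _)).contDiffAt)
    rw [h1, norm_smul, Real.norm_of_nonneg (hm0 k)]
    refine mul_le_mul_of_nonneg_left ?_ (hm0 k)
    rw [iteratedFDeriv_comp_const_smul (i := n) _ b.contDiff]
    simp only
    rw [norm_smul, norm_pow, norm_inv]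
    have h2 : ‖((k : ℝ) + 1)‖⁻¹ ^ n ≤ 1 := by
      rw [Real.norm_of_nonneg (by positivity)]
      refine pow_le_one₀ (by positivity) (inv_le_one_of_one_le₀ ?_)
      have : (0 : ℝ) ≤ k := by positivity
      linarith
    calc _ ≤ 1 * M n := mul_le_mul h2 (hM n _) (norm_nonneg _) zero_le_one
      _ = _ := one_mul _
  have hv : ∀ n : ℕ, (n : ℕ∞) ≤ ⊤ → Summable (fun k => m k * M n) := fun n _ => by
    simpa using (hsum 0).mul_right (M n)
  have hgz : ∀ (n k : ℕ) (y : ℝ2), 2 * ((k : ℝ) + 1) < ‖y‖ → iteratedFDeriv ℝ n (g k) y = 0 := by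
    intro n k y hy
    have : g k =ᶠ[nhds y] fun _ => (0 : ℝ) := by
      filter_upwards [(isOpen_lt continuous_const continuous_norm).mem_nhds hy] with z hz
      have : b (((k : ℝ) + 1)⁻¹ • z) = 0 := by
        apply b.zero_of_le_dist
        have hk : (0 : ℝ) < (k : ℝ) + 1 := by positivity
        rw [dist_zero_right, norm_smul, norm_inv, Real.norm_of_nonneg hk.le, inv_mul_eq_div,
          le_div_iff₀ hk]
        exact le_of_lt hz
      simp [g, this]
    rw [(this.iteratedFDeriv ℝ n).self_of_nhds]
    simp
  have hgpos : ∀ k y, 0 ≤ g k y := fun k y => mul_nonneg (hm0 k) b.nonneg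
  have hgsum : ∀ y, Summable fun k => g k y := fun y => by
    refine Summable.of_nonneg_of_le (fun k => hgpos k y) (fun k => ?_) (hv 0 le_top)
    have := hgb 0 k y
    rw [norm_iteratedFDeriv_zero] at this
    exact (le_abs_self _).trans this
  let w : 𝓢(ℝ2, ℝ) :=
    { toFun := fun y => ∑' k, g k y
      smooth' := contDiff_tsum hgc hv (fun n k y _ => hgb n k y)
      decay' := by
        intro j n
        refine ⟨∑' k : ℕ, (2 ^ j * M n) * (((k : ℝ) + 1) ^ j * m k), fun y => ?_⟩
        rw [iteratedFDeriv_tsum hgc hv (fun n k y _ => hgb n k y) le_top]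
        simp only
        have hsn : Summable fun k => ‖iteratedFDeriv ℝ n (g k) y‖ :=
          Summable.of_nonneg_of_le (fun _ => norm_nonneg _) (fun k => hgb n k y) (hv n le_top)
        calc _ ≤ ‖y‖ ^ j * ∑' k, ‖iteratedFDeriv ℝ n (g k) y‖ := by
              gcongr
              exact norm_tsum_le_tsum_norm hsn
          _ = ∑' k, ‖y‖ ^ j * ‖iteratedFDeriv ℝ n (g k) y‖ := tsum_mul_left.symm
          _ ≤ _ := by
              refine Summable.tsum_le_tsum (fun k => ?_) (hsn.mul_left _) ((hsum j).mul_left _)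
              have hMn : 0 ≤ M n := le_trans zero_le_one (hM1 n)
              by_cases hy : 2 * ((k : ℝ) + 1) < ‖y‖
              · rw [hgz n k y hy, norm_zero, mul_zero]
                have := hm0 k
                positivity
              · push Not at hy
                calc _ ≤ (2 * ((k : ℝ) + 1)) ^ j * (m k * M n) := by
                      gcongr
                      exact hgb n k y
                  _ = _ := by rw [mul_pow]; ring }
  have hge : ∀ (k : ℕ) (y : ℝ2), ‖y‖ ≤ (k : ℝ) + 1 → m k ≤ w y := by
    intro k y hy
    have h1 : g k y ≤ ∑' k, g k y := (hgsum y).le_tsum k (fun j _ => hgpos j y)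
    have h2 : g k y = m k := by
      have : b (((k : ℝ) + 1)⁻¹ • y) = 1 := by
        apply b.one_of_mem_closedBall
        have hk : (0 : ℝ) < (k : ℝ) + 1 := by positivity
        rw [mem_closedBall, dist_zero_right, norm_smul, norm_inv, Real.norm_of_nonneg hk.le,
          inv_mul_eq_div, div_le_iff₀ hk]
        simpa [b] using hy
      simp [g, this]
    rw [← h2]
    exact h1
  refine ⟨w, fun y => tsum_nonneg (fun k => hgpos k y), fun y hy => ?_, fun x hx y => ?_⟩
  · refine le_trans ?_ (hge 0 y ?_)
    · simpa [m] using hS0 0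
    · simpa using (mem_ball_zero_iff.1 hy).le
  · refine le_trans ?_ (hge ⌊‖y‖⌋₊ y (Nat.lt_floor_add_one _).le)
    have h1 : ‖η (x - y)‖ ≤ sSup (S ⌊‖y‖⌋₊) := by
      refine le_csSup (hbdd _) ⟨x - y, ?_, rfl⟩
      have h2 : (⌊‖y‖⌋₊ : ℝ) ≤ ‖y‖ := Nat.floor_le (norm_nonneg _)
      have h3 : ‖y‖ ≤ ‖x - y‖ + ‖x‖ := by
        have := norm_sub_norm_le y x
        rw [norm_sub_rev] at this
        linarith
      have h4 := mem_ball_zero_iff.1 hx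
      simp only [mem_ofPred_eq]
      linarith
    refine h1.trans ?_
    simp only [m]
    split_ifs <;> linarith

lemma scaled_bound {F : Type*} [NormedAddCommGroup F] [NormedSpace ℝ F]
    {G : ℝ2 × ℝ → F} (hc : ContDiff ℝ (⊤ : ℕ∞) G) (hs : HasCompactSupport G) (n : ℕ) :
    ∃ M : ℝ, 1 ≤ M ∧ ∀ lam : ℝ, 0 < lam → ∀ (ξ : ℝ) (z : ℝ2),
      ‖iteratedFDeriv ℝ n (fun z : ℝ2 => G (lam⁻¹ • z, ξ)) z‖ ≤ M * lam⁻¹ ^ n := by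
  obtain ⟨M, hM1, hM⟩ := bdd_iter hc hs n
  refine ⟨M, hM1, fun lam hlam ξ z => ?_⟩
  let g : ℝ2 →L[ℝ] ℝ2 × ℝ := lam⁻¹ • ContinuousLinearMap.inl ℝ ℝ2 ℝ
  let H : ℝ2 × ℝ → F := fun q => G (q + (0, ξ))
  have hH : ContDiff ℝ (⊤ : ℕ∞) H := hc.comp (contDiff_id.add contDiff_const)
  have he : (fun z : ℝ2 => G (lam⁻¹ • z, ξ)) = H ∘ g := by
    ext z
    simp [H, g]
  have hg : ‖g‖ ≤ lam⁻¹ := by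
    refine ContinuousLinearMap.opNorm_le_bound _ (by positivity) fun v => ?_
    simp [g, norm_smul, abs_of_pos hlam]
    positivity
  rw [he, g.iteratedFDeriv_comp_right (n := (⊤ : ℕ∞)) hH _ (by exact_mod_cast le_top)]
  refine (ContinuousMultilinearMap.norm_compContinuousLinearMap_le _ _).trans ?_
  rw [Finset.prod_const, Finset.card_univ, Fintype.card_fin]
  have : iteratedFDeriv ℝ n H (g z) = iteratedFDeriv ℝ n G (g z + (0, ξ)) :=
    iteratedFDeriv_comp_add_right n (0, ξ) (g z)
  rw [this]
  exact mul_le_mul (hM _) (pow_le_pow_left₀ (norm_nonneg _) hg n) (by positivity) (by linarith)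

lemma exp_deriv_bound (n : ℕ) (s : ℝ) :
    ‖iteratedFDeriv ℝ n (fun s : ℝ => Complex.exp (Complex.I * (s : ℂ))) s‖ ≤ 1 := by
  have h : ∀ n : ℕ, iteratedDeriv n (fun s : ℝ => Complex.exp (Complex.I * (s : ℂ))) =
      fun s : ℝ => Complex.I ^ n * Complex.exp (Complex.I * (s : ℂ)) := by
    intro n
    induction n with
    | zero => simp
    | succ n ih =>
      rw [iteratedDeriv_succ, ih]
      ext t
      have h1 : HasDerivAt (fun s : ℝ => Complex.I * (s : ℂ)) Complex.I t := by
        simpa using (Complex.ofRealCLM.hasDerivAt (x := t)).const_mul Complex.I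
      have h2 := (h1.cexp.const_mul (Complex.I ^ n)).deriv
      rw [h2]
      ring
  rw [norm_iteratedFDeriv_eq_norm_iteratedDeriv, h n, norm_mul, norm_pow, Complex.norm_I, one_pow,
    one_mul, mul_comm, Complex.norm_exp_ofReal_mul_I]

lemma amp_bound {E : ℝ2 × ℝ → ℝ} {b : ℝ2 × ℝ → ℂ}
    (hE : ContDiff ℝ (⊤ : ℕ∞) E) (hEs : HasCompactSupport E)
    (hE0 : ∀ ξ, HasFDerivAt (fun x : ℝ2 => E (x, ξ)) (0 : ℝ2 →L[ℝ] ℝ) 0)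
    (hb : ContDiff ℝ (⊤ : ℕ∞) b) (hbs : HasCompactSupport b) (n : ℕ) :
    ∃ C : ℝ, 0 ≤ C ∧ ∀ lam : ℝ, 1 ≤ lam → ∀ (ξ : ℝ) (z : ℝ2),
      ‖iteratedFDeriv ℝ n (fun z : ℝ2 =>
        Complex.exp (Complex.I * ((lam * E (lam⁻¹ • z, ξ) : ℝ) : ℂ)) * b (lam⁻¹ • z, ξ)) z‖ ≤
        C * ((√lam)⁻¹ * (1 + ‖z‖)) ^ n := by
  choose M hM1 hM using fun k => scaled_bound hE hEs k
  choose B hB1 hB using fun k => scaled_bound hb hbs k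
  let K : ℝ := ∑ k ∈ Finset.range (n + 3), (M k + B k)
  have hMp : ∀ k, 0 ≤ M k := fun k => zero_le_one.trans (hM1 k)
  have hBp : ∀ k, 0 ≤ B k := fun k => zero_le_one.trans (hB1 k)
  have hMK : ∀ k ≤ n + 2, M k + B k ≤ K := fun k hk =>
    Finset.single_le_sum (f := fun k => M k + B k) (fun i _ => add_nonneg (hMp i) (hBp i))
      (Finset.mem_range.2 (by omega))
  have hK1 : 1 ≤ K := by
    have := hMK 0 (by omega)
    linarith [hM1 0, hBp 0]
  refine ⟨∑ i ∈ Finset.range (n + 1), (n.choose i : ℝ) * (i.factorial * 1 * K ^ i) *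
    (K * K ^ (n - i)), by positivity, fun lam hlam ξ z => ?_⟩
  have hl0 : 0 < lam := by linarith
  set s := (√lam)⁻¹ with hs
  have hs0 : 0 < s := by positivity
  have hs1 : s ≤ 1 := inv_le_one_of_one_le₀ (Real.one_le_sqrt.2 hlam)
  have hs2 : lam⁻¹ = s ^ 2 := by rw [hs, inv_pow, Real.sq_sqrt hl0.le]
  have hls : lam * s ^ 2 = 1 := by rw [← hs2]; exact mul_inv_cancel₀ hl0.ne'
  set t := s * (1 + ‖z‖) with ht
  have hst : s ≤ t := by
    rw [ht]
    nlinarith [norm_nonneg z]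
  have ht0 : 0 ≤ t := hs0.le.trans hst
  let F : ℝ2 → ℝ := fun z => lam * E (lam⁻¹ • z, ξ)
  have hpair : ContDiff ℝ (⊤ : ℕ∞) (fun z : ℝ2 => (lam⁻¹ • z, ξ)) :=
    (contDiff_const_smul _).prodMk contDiff_const
  have hF0c : ContDiff ℝ (⊤ : ℕ∞) (fun z : ℝ2 => E (lam⁻¹ • z, ξ)) := hE.comp hpair
  have hFc : ContDiff ℝ (⊤ : ℕ∞) F := contDiff_const.mul hF0c
  have hbc : ContDiff ℝ (⊤ : ℕ∞) (fun z : ℝ2 => b (lam⁻¹ • z, ξ)) := hb.comp hpair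
  have hFi : ∀ (i : ℕ) (z : ℝ2), ‖iteratedFDeriv ℝ i F z‖ ≤ lam * (M i * (s ^ 2) ^ i) := by
    intro i z
    have h1 : iteratedFDeriv ℝ i F z = lam • iteratedFDeriv ℝ i (fun z => E (lam⁻¹ • z, ξ)) z :=
      iteratedFDeriv_const_smul_apply (f := fun z => E (lam⁻¹ • z, ξ)) (a := lam)
        ((hF0c.of_le (by exact_mod_cast le_top)).contDiffAt)
    rw [h1, norm_smul, Real.norm_of_nonneg hl0.le, ← hs2]
    exact mul_le_mul_of_nonneg_left (hM i lam hl0 ξ z) hl0.le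
  have hF1 : ‖iteratedFDeriv ℝ 1 F z‖ ≤ M 2 * s ^ 2 * ‖z‖ := by
    have h0 : iteratedFDeriv ℝ 1 F 0 = 0 := by
      rw [← norm_eq_zero, norm_iteratedFDeriv_one, norm_eq_zero]
      have h1 : HasFDerivAt (fun z : ℝ2 => lam⁻¹ • z) (lam⁻¹ • ContinuousLinearMap.id ℝ ℝ2) 0 :=
        (hasFDerivAt_id (0 : ℝ2)).const_smul lam⁻¹
      have h2 : HasFDerivAt (fun x : ℝ2 => E (x, ξ)) (0 : ℝ2 →L[ℝ] ℝ) (lam⁻¹ • (0 : ℝ2)) := by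
        simpa using hE0 ξ
      have h3 := (h2.comp (0 : ℝ2) h1).const_mul lam
      have h4 : HasFDerivAt F (0 : ℝ2 →L[ℝ] ℝ) 0 := by simpa using h3
      exact h4.fderiv
    have h2 := Convex.norm_image_sub_le_of_norm_fderiv_le (𝕜 := ℝ) (f := iteratedFDeriv ℝ 1 F)
      (s := Set.univ) (x := 0) (y := z) (C := M 2 * s ^ 2)
      (fun x _ => (hFc.differentiable_iteratedFDeriv (m := 1)
        (by exact_mod_cast WithTop.coe_lt_top _)) x)
      (fun x _ => by
        rw [norm_fderiv_iteratedFDeriv]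
        refine (hFi 2 x).trans (le_of_eq ?_)
        linear_combination M 2 * s ^ 2 * hls) convex_univ (mem_univ _) (mem_univ _)
    simpa [h0] using h2
  have hFD : ∀ i, 1 ≤ i → i ≤ n → ‖iteratedFDeriv ℝ i F z‖ ≤ (K * t) ^ i := by
    intro i hi hin
    rcases Nat.lt_or_ge 1 i with h2 | h2
    · refine (hFi i z).trans ?_
      obtain ⟨j, rfl⟩ := Nat.exists_eq_add_of_le h2
      have e1 : lam * (M (Nat.succ 1 + j) * (s ^ 2) ^ (Nat.succ 1 + j)) =
          M (Nat.succ 1 + j) * (s ^ (Nat.succ 1 + j) * s ^ j) := by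
        simp only [Nat.succ_eq_add_one]
        ring_nf
        linear_combination (M (2 + j) * s ^ (2 * j) * s ^ 2) * hls
      rw [e1, mul_pow]
      have h3 : M (Nat.succ 1 + j) ≤ K ^ (Nat.succ 1 + j) := by
        have := hMK (Nat.succ 1 + j) (by omega)
        refine le_trans (by linarith [hBp (Nat.succ 1 + j)]) (le_self_pow₀ hK1 (by omega))
      have h4 : s ^ (Nat.succ 1 + j) * s ^ j ≤ t ^ (Nat.succ 1 + j) := by
        have := pow_le_one₀ hs0.le hs1 (n := j)
        have h5 := pow_le_pow_left₀ hs0.le hst (Nat.succ 1 + j)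
        have h6 : 0 ≤ s ^ (Nat.succ 1 + j) := by positivity
        nlinarith
      exact mul_le_mul h3 h4 (by positivity) (by positivity)
    · obtain rfl : i = 1 := by omega
      refine hF1.trans ?_
      rw [pow_one, mul_assoc]
      have h3 := hMK 2 (by omega)
      refine mul_le_mul (by linarith [hBp 2]) ?_ (by positivity) (by linarith)
      rw [ht]
      nlinarith [norm_nonneg z, mul_nonneg hs0.le (norm_nonneg z)]
  have hec : ContDiff ℝ (⊤ : ℕ∞) (fun s : ℝ => Complex.exp (Complex.I * (s : ℂ))) :=
    (contDiff_const.mul Complex.ofRealCLM.contDiff).cexp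
  have hexp : ∀ i ≤ n, ‖iteratedFDeriv ℝ i (fun z => Complex.exp (Complex.I * ((F z : ℝ) : ℂ))) z‖ ≤
      i.factorial * 1 * (K * t) ^ i := by
    intro i hi
    exact norm_iteratedFDeriv_comp_le (g := fun s : ℝ => Complex.exp (Complex.I * (s : ℂ)))
      (f := F) hec hFc (by exact_mod_cast le_top) z (fun j _ => exp_deriv_bound j _)
      (fun j h1 h2 => hFD j h1 (h2.trans hi))
  have hbD : ∀ i ≤ n, ‖iteratedFDeriv ℝ i (fun z : ℝ2 => b (lam⁻¹ • z, ξ)) z‖ ≤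
      K * (K * t) ^ i := by
    intro i hi
    refine (hB i lam hl0 ξ z).trans ?_
    rw [hs2]
    have h3 := hMK i (by omega)
    refine mul_le_mul (by linarith [hMp i]) (pow_le_pow_left₀ (by positivity) ?_ i)
      (by positivity) (by linarith)
    nlinarith
  refine (norm_iteratedFDeriv_mul_le (n := n) (hec.comp hFc) hbc z
    (by exact_mod_cast le_top)).trans ?_
  rw [Finset.sum_mul]
  refine Finset.sum_le_sum fun i hi => ?_
  have hin : i ≤ n := by
    have := Finset.mem_range.1 hi
    omega
  calc _ ≤ (n.choose i : ℝ) * (i.factorial * 1 * (K * t) ^ i) * (K * (K * t) ^ (n - i)) := by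
        refine mul_le_mul (mul_le_mul_of_nonneg_left (hexp i hin) (by positivity))
          (hbD (n - i) (by omega)) (norm_nonneg _) (by positivity)
    _ = _ := by
        have : t ^ n = t ^ i * t ^ (n - i) := by rw [← pow_add]; congr 1; omega
        rw [this, mul_pow, mul_pow]
        ring_nf

lemma taylor_line {A : ℝ2 → ℂ} (hA : ContDiff ℝ (⊤ : ℕ∞) A) (n : ℕ) (K : ℝ)
    (hK : ∀ z, ‖iteratedFDeriv ℝ (n + 1) A z‖ ≤ K * (1 + ‖z‖) ^ (n + 1)) (hK0 : 0 ≤ K)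
    (x : ℝ2) (hx : ‖x‖ ≤ 1) (y : ℝ2) :
    ‖A (x - y) - ∑ k ∈ Finset.range (n + 1), ((k.factorial : ℝ)⁻¹ : ℝ) •
      iteratedFDeriv ℝ k A x (fun _ => -y)‖ ≤ K * ((2 + ‖y‖) ^ (2 * (n + 1))) := by
  let g : ℝ →L[ℝ] ℝ2 := ContinuousLinearMap.toSpanSingleton ℝ (-y)
  let H : ℝ2 → ℂ := fun v => A (x + v)
  have hH : ContDiff ℝ (⊤ : ℕ∞) H := hA.comp (contDiff_const.add contDiff_id)
  have hHg : ContDiff ℝ (⊤ : ℕ∞) (H ∘ g) := hH.comp g.contDiff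
  have hder : ∀ (k : ℕ) (t : ℝ), iteratedDeriv k (H ∘ g) t =
      iteratedFDeriv ℝ k A (x + t • (-y)) (fun _ => -y) := by
    intro k t
    rw [iteratedDeriv_eq_iteratedFDeriv,
      g.iteratedFDeriv_comp_right (n := (⊤ : ℕ∞)) hH _ (by exact_mod_cast le_top)]
    have : iteratedFDeriv ℝ k H (g t) = iteratedFDeriv ℝ k A (x + g t) :=
      iteratedFDeriv_comp_add_left k x (g t)
    rw [this]
    simp [g]
  have hU : UniqueDiffOn ℝ (Icc (0 : ℝ) 1) := uniqueDiffOn_Icc one_pos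
  have hw : ∀ (k : ℕ) (t : ℝ), t ∈ Icc (0 : ℝ) 1 →
      iteratedDerivWithin k (H ∘ g) (Icc 0 1) t =
      iteratedFDeriv ℝ k A (x + t • (-y)) (fun _ => -y) := by
    intro k t ht
    rw [← hder, iteratedDerivWithin_eq_iteratedDeriv hU
      ((hHg.of_le (by exact_mod_cast le_top)).contDiffAt) ht]
  have hb : ∀ t ∈ Icc (0 : ℝ) 1, ‖iteratedDerivWithin (n + 1) (H ∘ g) (Icc 0 1) t‖ ≤
      K * (2 + ‖y‖) ^ (2 * (n + 1)) := by
    intro t ht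
    rw [hw _ t ht]
    refine (ContinuousMultilinearMap.le_opNorm _ _).trans ?_
    rw [Finset.prod_const, Finset.card_univ, Fintype.card_fin, norm_neg,
      show (2 + ‖y‖) ^ (2 * (n + 1)) = (2 + ‖y‖) ^ (n + 1) * (2 + ‖y‖) ^ (n + 1) by ring,
      ← mul_assoc]
    have h1 : ‖x + t • (-y)‖ ≤ 1 + ‖y‖ := by
      refine (norm_add_le _ _).trans (add_le_add hx ?_)
      rw [norm_smul, norm_neg, Real.norm_of_nonneg ht.1]
      exact mul_le_of_le_one_left (norm_nonneg _) ht.2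
    refine mul_le_mul ((hK _).trans ?_) (pow_le_pow_left₀ (norm_nonneg _) (by linarith) _)
      (by positivity) (by positivity)
    refine mul_le_mul_of_nonneg_left (pow_le_pow_left₀ (by positivity) (by linarith) _) hK0
  have hT := taylor_mean_remainder_bound (f := H ∘ g) (a := 0) (b := 1) (x := 1) (n := n)
    zero_le_one ((hHg.of_le (by exact_mod_cast le_top)).contDiffOn) (by simp) hb
  rw [taylor_within_apply] at hT
  have e1 : (H ∘ g) 1 = A (x - y) := by simp [H, g, sub_eq_add_neg]
  rw [e1] at hT
  have e2 : ∀ k, iteratedDerivWithin k (H ∘ g) (Icc 0 1) 0 = iteratedFDeriv ℝ k A x (fun _ => -y) := by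
    intro k
    rw [hw k 0 (by simp)]
    simp
  simp only [e2, sub_zero, one_pow, mul_one] at hT
  refine hT.trans (div_le_self (by positivity) ?_)
  exact_mod_cast Nat.one_le_iff_ne_zero.2 (Nat.factorial_ne_zero n)

lemma repro (η : 𝓢(ℝ2, ℂ)) (n : ℕ) : ∃ J : ℝ, 0 ≤ J ∧ ∀ ω : ℝ2,
    (∫ y, Complex.exp (((-2 * π * inner ℝ y ω : ℝ) : ℂ) * Complex.I) * η y = 1) →
    (∀ k : ℕ, k ≠ 0 → ∀ L : ContinuousMultilinearMap ℝ (fun _ : Fin k => ℝ2) ℂ,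
      ∫ y, Complex.exp (((-2 * π * inner ℝ y ω : ℝ) : ℂ) * Complex.I) * η y * L (fun _ => y)
        = 0) →
    ∀ (A : ℝ2 → ℂ), ContDiff ℝ (⊤ : ℕ∞) A → ∀ K B : ℝ, 0 ≤ K →
    (∀ z, ‖iteratedFDeriv ℝ (n + 1) A z‖ ≤ K * (1 + ‖z‖) ^ (n + 1)) → (∀ z, ‖A z‖ ≤ B) →
    ∀ x : ℝ2, ‖x‖ ≤ 1 → 
    ‖(∫ y, Complex.exp (((-2 * π * inner ℝ y ω : ℝ) : ℂ) * Complex.I) * η y * A (x - y)) - A x‖ ≤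
      K * J := by
  refine ⟨∫ y, ‖η y‖ * (2 + ‖y‖) ^ (2 * (n + 1)), by positivity, ?_⟩
  intro ω h1 h0 A hA K B hK0 hK hB x hx
  have hint : ∀ k : ℕ, Integrable (fun v => ‖v‖ ^ k * ‖η v‖) := fun k =>
    η.integrable_pow_mul volume k
  have hJ : Integrable fun y => ‖η y‖ * (2 + ‖y‖) ^ (2 * (n + 1)) := by
    simp_rw [add_pow, Finset.mul_sum]
    refine integrable_finsetSum _ fun i _ => ?_
    refine ((hint (2 * (n + 1) - i)).mul_const (2 ^ i * ((2 * (n + 1)).choose i : ℝ))).congr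
      (ae_of_all _ fun y => ?_)
    simp only
    ring
  set e : ℝ2 → ℂ := fun y => Complex.exp (((-2 * π * inner ℝ y ω : ℝ) : ℂ) * Complex.I) * η y with he
  have hec : Continuous e := by
    have := η.continuous
    fun_prop
  have hen : ∀ y, ‖e y‖ = ‖η y‖ := fun y => by
    rw [he]
    simp only
    rw [norm_mul, Complex.norm_exp_ofReal_mul_I, one_mul]
  have hLint : ∀ (k : ℕ) (L : ContinuousMultilinearMap ℝ (fun _ : Fin k => ℝ2) ℂ),
      Integrable fun y => e y * L (fun _ => y) := by
    intro k L
    refine ((hint k).const_mul ‖L‖).mono' ?_ (ae_of_all _ fun y => ?_)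
    · exact (hec.mul (L.cont.comp (continuous_pi fun _ => continuous_id))).aestronglyMeasurable
    · rw [norm_mul, hen]
      have := L.le_opNorm (fun _ => y)
      rw [Finset.prod_const, Finset.card_univ, Fintype.card_fin] at this
      calc _ ≤ ‖η y‖ * (‖L‖ * ‖y‖ ^ k) := by gcongr
        _ = _ := by ring
  let L : (k : ℕ) → ContinuousMultilinearMap ℝ (fun _ : Fin k => ℝ2) ℂ := fun k =>
    ((k.factorial : ℝ)⁻¹ : ℝ) • (iteratedFDeriv ℝ k A x).compContinuousLinearMap
      (fun _ => -ContinuousLinearMap.id ℝ ℝ2)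
  have hL : ∀ k y, L k (fun _ => y) =
      ((k.factorial : ℝ)⁻¹ : ℝ) • iteratedFDeriv ℝ k A x (fun _ => -y) := by
    intro k y
    simp [L]
  have hAint : Integrable fun y => e y * A (x - y) := by
    have := η.integrable (μ := volume)
    refine (this.norm.mul_const B).mono' ?_ (ae_of_all _ fun y => ?_)
    · exact (hec.mul (hA.continuous.comp (continuous_const.sub continuous_id))).aestronglyMeasurable
    · rw [norm_mul, hen]
      gcongr
      exact hB _
  have hpoly : ∫ y, e y * ∑ k ∈ Finset.range (n + 1), L k (fun _ => y) = A x := by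
    simp_rw [Finset.mul_sum]
    rw [integral_finsetSum _ (fun k _ => hLint k (L k)), Finset.sum_range_succ',
      Finset.sum_eq_zero (fun k _ => h0 (k + 1) (by omega) (L (k + 1))), zero_add]
    have : ∀ y : ℝ2, L 0 (fun _ => y) = A x := by
      intro y
      rw [hL]
      simp
    simp_rw [this]
    rw [integral_mul_const, h1, one_mul]
  have hpint : Integrable fun y => e y * ∑ k ∈ Finset.range (n + 1), L k (fun _ => y) := by
    simp_rw [Finset.mul_sum]
    exact integrable_finsetSum _ fun k _ => hLint k (L k)
  rw [← hpoly, ← integral_sub hAint hpint, ← integral_const_mul]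
  refine norm_integral_le_of_norm_le (hJ.const_mul K) (ae_of_all _ fun y => ?_)
  rw [← mul_sub, norm_mul, hen]
  have := taylor_line hA n K hK hK0 x hx y
  simp_rw [hL]
  calc _ ≤ ‖η y‖ * (K * (2 + ‖y‖) ^ (2 * (n + 1))) := by gcongr
    _ = _ := by ring

lemma kernel_repro {Npar : ℕ} {cpar : ℝ} {Cab : ℕ → ℝ} {a φ : ℝ2 → ℝ → ℝ} {h : ℝ → ℝ}
    {E : ℝ2 → ℝ → ℝ} (H : IsReducedForm Npar cpar Cab a φ h E) :
    ∃ η : 𝓢(ℝ2, ℂ), ∀ N : ℕ, ∃ C : ℝ, 0 ≤ C ∧ ∀ lam : ℝ, 1 ≤ lam → ∀ ξ ∈ Ioo (0 : ℝ) 1,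
      ∀ x ∈ ball (0 : ℝ2) 1,
      ‖(∫ y, η y * (Complex.exp (Complex.I * ((lam * φ (lam⁻¹ • (x - y)) ξ : ℝ) : ℂ)) *
          ((a (lam⁻¹ • (x - y)) ξ : ℝ) : ℂ))) -
        Complex.exp (Complex.I * ((lam * φ (lam⁻¹ • x) ξ : ℝ) : ℂ)) *
          ((a (lam⁻¹ • x) ξ : ℝ) : ℂ)‖ ≤ C * lam ^ (-(N : ℝ)) := by
  -- frequency curve
  let om : ℝ → ℝ2 := fun ξ => (2 * π)⁻¹ • (ξ • EuclideanSpace.single 0 (1 : ℝ) +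
    h ξ • EuclideanSpace.single 1 (1 : ℝ))
  have homc : Continuous om := by
    have := H.h_smooth.continuous
    fun_prop
  obtain ⟨R, hR⟩ := (isCompact_Icc (a := (0 : ℝ)) (b := 1)).exists_bound_of_continuousOn
    homc.continuousOn
  obtain ⟨η, hη⟩ := eta_exists (|R| + 1) (by positivity)
  refine ⟨η, fun N => ?_⟩
  let χ : ContDiffBump (0 : ℝ2 × ℝ) := ⟨2, 3, by norm_num, by norm_num⟩
  let E' : ℝ2 × ℝ → ℝ := fun p => χ p * E p.1 p.2
  let b : ℝ2 × ℝ → ℂ := fun p => ((a p.1 p.2 : ℝ) : ℂ)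
  have hE' : ContDiff ℝ (⊤ : ℕ∞) E' := χ.contDiff.mul H.E_smooth
  have hE's : HasCompactSupport E' := χ.hasCompactSupport.mul_right
  have hb : ContDiff ℝ (⊤ : ℕ∞) b := Complex.ofRealCLM.contDiff.comp H.a_smooth
  have hab : ∀ p : ℝ2 × ℝ, a p.1 p.2 ≠ 0 → ‖p‖ ≤ 1 := by
    intro p hp
    obtain ⟨h1, h2⟩ := H.a_supp _ _ hp
    rw [Prod.norm_def, max_le_iff]
    refine ⟨h1.le, ?_⟩
    rw [Real.norm_of_nonneg h2.1.le]
    exact h2.2.le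
  have hbs : HasCompactSupport b := by
    refine HasCompactSupport.intro (isCompact_closedBall (0 : ℝ2 × ℝ) 1) fun p hp => ?_
    by_contra hne
    refine hp (mem_closedBall_zero_iff.2 (hab p fun h0 => hne ?_))
    simp [b, h0]
  have hE0 : ∀ ξ, HasFDerivAt (fun x : ℝ2 => E' (x, ξ)) (0 : ℝ2 →L[ℝ] ℝ) 0 := by
    intro ξ
    have hp : ContDiff ℝ (⊤ : ℕ∞) (fun x : ℝ2 => (x, ξ)) := contDiff_id.prodMk contDiff_const
    have h1 : DifferentiableAt ℝ (fun x : ℝ2 => χ (x, ξ)) 0 :=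
      ((χ.contDiff (n := (⊤ : ℕ∞))).comp hp).differentiable (by simp) 0
    have h2 : DifferentiableAt ℝ (fun x : ℝ2 => E x ξ) 0 :=
      (H.E_smooth.comp hp).differentiable (by simp) 0
    have h3 := h1.hasFDerivAt.mul h2.hasFDerivAt
    rw [H.E_fderiv_zero_left ξ, H.E_zero_left ξ, smul_zero, zero_smul, add_zero] at h3
    exact h3
  obtain ⟨C, hC0, hC⟩ := amp_bound hE' hE's hE0 hb hbs (2 * N + 1)
  obtain ⟨B, hB0, hB⟩ := amp_bound hE' hE's hE0 hb hbs 0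
  obtain ⟨J, hJ0, hJ⟩ := repro η (2 * N)
  refine ⟨C * J, by positivity, fun lam hlam ξ hξ x hx => ?_⟩
  have hl0 : 0 < lam := by linarith
  have hom : ‖om ξ‖ < |R| + 1 := by
    have := hR ξ ⟨hξ.1.le, hξ.2.le⟩
    linarith [le_abs_self R]
  obtain ⟨hη1, hη2⟩ := hη (om ξ) hom
  let A : ℝ2 → ℂ := fun z =>
    Complex.exp (Complex.I * ((lam * E' (lam⁻¹ • z, ξ) : ℝ) : ℂ)) * b (lam⁻¹ • z, ξ)
  have hpair : ContDiff ℝ (⊤ : ℕ∞) (fun z : ℝ2 => (lam⁻¹ • z, ξ)) :=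
    (contDiff_const_smul _).prodMk contDiff_const
  have hA : ContDiff ℝ (⊤ : ℕ∞) A := by
    refine ContDiff.mul (ContDiff.cexp (contDiff_const.mul (Complex.ofRealCLM.contDiff.comp ?_)))
      (hb.comp hpair)
    exact contDiff_const.mul (hE'.comp hpair)
  have hinner : ∀ y : ℝ2, 2 * π * inner ℝ y (om ξ) = y 0 * ξ + y 1 * h ξ := by
    intro y
    have : (2 * π) ≠ 0 := by positivity
    simp only [om, inner_smul_right, inner_add_right, EuclideanSpace.inner_single_right]
    rw [← mul_assoc, mul_inv_cancel₀ this]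
    simp
    ring
  have hK : ∀ z : ℝ2, Complex.exp (Complex.I * ((lam * φ (lam⁻¹ • z) ξ : ℝ) : ℂ)) *
      ((a (lam⁻¹ • z) ξ : ℝ) : ℂ) =
      Complex.exp (((2 * π * inner ℝ z (om ξ) : ℝ) : ℂ) * Complex.I) * A z := by
    intro z
    by_cases ha : a (lam⁻¹ • z) ξ = 0
    · simp [A, b, ha]
    · have hχ : χ (lam⁻¹ • z, ξ) = 1 := by
        apply χ.one_of_mem_closedBall
        rw [mem_closedBall_zero_iff]
        refine (hab (lam⁻¹ • z, ξ) ha).trans ?_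
        norm_num [χ]
      simp only [A, b, E', hχ, one_mul]
      rw [← mul_assoc, ← Complex.exp_add, H.decomp _ _ ha, hinner]
      congr 2
      have hlc : (lam : ℂ) ≠ 0 := by exact_mod_cast hl0.ne'
      simp only [PiLp.smul_apply, smul_eq_mul]
      push_cast
      field_simp
  have key := hJ (om ξ) hη1 hη2 A hA (C * ((√lam)⁻¹) ^ (2 * N + 1)) B (by positivity)
    (fun z => by
      have := hC lam hlam ξ z
      rw [mul_pow, ← mul_assoc] at this
      exact this)
    (fun z => by
      have := hB lam hlam ξ z
      rw [norm_iteratedFDeriv_zero, pow_zero, mul_one] at this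
      exact this)
    x (mem_ball_zero_iff.1 hx).le
  have hfact : (∫ y, η y * (Complex.exp (Complex.I * ((lam * φ (lam⁻¹ • (x - y)) ξ : ℝ) : ℂ)) *
          ((a (lam⁻¹ • (x - y)) ξ : ℝ) : ℂ))) =
      Complex.exp (((2 * π * inner ℝ x (om ξ) : ℝ) : ℂ) * Complex.I) *
      ∫ y, Complex.exp (((-2 * π * inner ℝ y (om ξ) : ℝ) : ℂ) * Complex.I) * η y * A (x - y) := by
    rw [← integral_const_mul]
    refine integral_congr_ae (ae_of_all _ fun y => ?_)
    simp only
    rw [hK, inner_sub_left]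
    have : Complex.exp (((2 * π * (inner ℝ x (om ξ) - inner ℝ y (om ξ)) : ℝ) : ℂ) * Complex.I) =
        Complex.exp (((2 * π * inner ℝ x (om ξ) : ℝ) : ℂ) * Complex.I) *
        Complex.exp (((-2 * π * inner ℝ y (om ξ) : ℝ) : ℂ) * Complex.I) := by
      rw [← Complex.exp_add]
      congr 1
      push_cast
      ring
    rw [this]
    ring
  rw [hfact, hK, ← mul_sub, norm_mul, Complex.norm_exp_ofReal_mul_I, one_mul]
  refine key.trans ?_
  have hs : ((√lam)⁻¹) ^ (2 * N + 1) ≤ lam ^ (-(N : ℝ)) := by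
    rw [Real.rpow_neg hl0.le, Real.rpow_natCast]
    have hs1 : (√lam)⁻¹ ≤ 1 := inv_le_one_of_one_le₀ (Real.one_le_sqrt.2 hlam)
    calc ((√lam)⁻¹) ^ (2 * N + 1) ≤ ((√lam)⁻¹) ^ (2 * N) :=
          pow_le_pow_of_le_one (by positivity) hs1 (by omega)
      _ = _ := by rw [pow_mul, inv_pow, Real.sq_sqrt hl0.le, inv_pow]
  calc _ = C * J * ((√lam)⁻¹) ^ (2 * N + 1) := by ring
    _ ≤ _ := by gcongr

end helpers

/-- Lemma 2.6 of the paper, locally constant property: for every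
`1 ≤ p ≤ ∞` there is a constant `C_p` and a nonnegative Schwartz weight `w ≥ 1` on
`B(0,1)` such that, up to a rapidly decaying error,
`‖T^λ f‖_{L^∞(B(0,1))} ≲ ‖T^λ f‖_{L^p(w dx)}`. -/
theorem locally_constant_property :
    ∃ N₀ : ℕ, ∃ c₀ : ℝ, 0 < c₀ ∧
      ∀ Npar : ℕ, N₀ ≤ Npar → ∀ cpar : ℝ, 0 < cpar → cpar ≤ c₀ →
      ∀ (Cab : ℕ → ℝ) (a φ : ℝ2 → ℝ → ℝ) (h : ℝ → ℝ) (E : ℝ2 → ℝ → ℝ),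
        IsReducedForm Npar cpar Cab a φ h E →
      ∀ p : ℝ≥0∞, 1 ≤ p →
      ∃ Cp : ℝ, 0 < Cp ∧
      ∃ w : SchwartzMap ℝ2 ℝ, (∀ y, 0 ≤ w y) ∧ (∀ y ∈ Metric.ball (0 : ℝ2) 1, 1 ≤ w y) ∧
        ∀ N : ℕ, ∃ CN : ℝ, 0 < CN ∧
          ∀ lam : ℝ, 1 ≤ lam →
          ∀ f : ℝ → ℂ, Integrable f volume → Function.support f ⊆ Set.Ioo (0 : ℝ) 1 →
          ∀ x ∈ Metric.ball (0 : ℝ2) 1,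
            ENNReal.ofReal ‖Tlam φ a lam f x‖ ≤
              ENNReal.ofReal Cp *
                  eLpNorm (Tlam φ a lam f) p
                    (volume.withDensity fun y => ENNReal.ofReal (w y)) +
                ENNReal.ofReal (CN * lam ^ (-(N : ℝ)) * ∫ ξ : ℝ, ‖f ξ‖) := by
  refine ⟨0, 1, one_pos, ?_⟩
  intro Npar _ cpar _ _ Cab a φ h E H p hp
  obtain ⟨η, hη⟩ := kernel_repro H
  obtain ⟨w, hw0, hw1, hw⟩ := majorant η
  set μ : Measure ℝ2 := volume.withDensity fun y => ENNReal.ofReal (w y) with hμ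
  have hμfin : μ univ < ∞ := by
    rw [hμ, withDensity_apply _ MeasurableSet.univ, Measure.restrict_univ]
    exact (w.integrable (μ := volume)).lintegral_lt_top
  have hexpo : 0 ≤ 1 / (1 : ℝ≥0∞).toReal - 1 / p.toReal := by
    rcases eq_or_ne p ∞ with rfl | hpt
    · simp
    · have : 1 ≤ p.toReal := by
        have := ENNReal.toReal_mono hpt hp
        simpa using this
      have := div_le_one_of_le₀ this (by linarith)
      simpa using this
  have hcfin : μ univ ^ (1 / (1 : ℝ≥0∞).toReal - 1 / p.toReal) ≠ ∞ :=
    ENNReal.rpow_ne_top_of_nonneg hexpo hμfin.ne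
  set cc := μ univ ^ (1 / (1 : ℝ≥0∞).toReal - 1 / p.toReal) with hcc
  refine ⟨cc.toReal + 1, by positivity, w, hw0, hw1, fun N => ?_⟩
  obtain ⟨C, hC0, hC⟩ := hη N
  refine ⟨C + 1, by positivity, fun lam hlam f hf hfs x hx => ?_⟩
  have hl0 : 0 < lam := by linarith
  -- the kernel
  let K : ℝ2 → ℝ → ℂ := fun z ξ =>
    Complex.exp (Complex.I * ((lam * φ (lam⁻¹ • z) ξ : ℝ) : ℂ)) * ((a (lam⁻¹ • z) ξ : ℝ) : ℂ)
  have hKc : Continuous fun q : ℝ2 × ℝ => K q.1 q.2 := by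
    have h1 : Continuous fun q : ℝ2 × ℝ => φ (lam⁻¹ • q.1) q.2 :=
      H.φ_smooth.continuous.comp (f := fun q : ℝ2 × ℝ => (lam⁻¹ • q.1, q.2)) (by fun_prop)
    have h2 : Continuous fun q : ℝ2 × ℝ => a (lam⁻¹ • q.1) q.2 :=
      H.a_smooth.continuous.comp (f := fun q : ℝ2 × ℝ => (lam⁻¹ • q.1, q.2)) (by fun_prop)
    exact (Complex.continuous_exp.comp (continuous_const.mul (Complex.continuous_ofReal.comp
      (continuous_const.mul h1)))).mul (Complex.continuous_ofReal.comp h2)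
  obtain ⟨B, hB⟩ : ∃ B : ℝ, ∀ q : ℝ2 × ℝ, ‖a q.1 q.2‖ ≤ B := by
    have hs : HasCompactSupport fun q : ℝ2 × ℝ => a q.1 q.2 := by
      refine HasCompactSupport.intro (isCompact_closedBall (0 : ℝ2 × ℝ) 1) fun q hq => ?_
      by_contra hne
      obtain ⟨h1, h2⟩ := H.a_supp _ _ hne
      refine hq (mem_closedBall_zero_iff.2 ?_)
      rw [Prod.norm_def, max_le_iff]
      refine ⟨h1.le, ?_⟩
      rw [Real.norm_of_nonneg h2.1.le]
      exact h2.2.le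
    exact hs.exists_bound_of_continuous H.a_smooth.continuous
  have hKB : ∀ z ξ, ‖K z ξ‖ ≤ B := by
    intro z ξ
    simp only [K]
    rw [norm_mul, mul_comm Complex.I, Complex.norm_exp_ofReal_mul_I, one_mul, Complex.norm_real]
    exact hB (lam⁻¹ • z, ξ)
  have hKξ : ∀ z, Continuous (K z) := fun z => hKc.comp (f := fun ξ => (z, ξ)) (by fun_prop)
  have hKz : ∀ ξ, Continuous fun z => K z ξ := fun ξ => hKc.comp (f := fun z => (z, ξ)) (by fun_prop)
  have hT : ∀ z, Tlam φ a lam f z = ∫ ξ, K z ξ * f ξ := fun z => rfl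
  have hKf : ∀ z, Integrable fun ξ => K z ξ * f ξ := fun z =>
    hf.bdd_mul (hKξ z).aestronglyMeasurable (ae_of_all _ (hKB z))
  have hTc : Continuous (Tlam φ a lam f) := by
    have : Tlam φ a lam f = fun z => ∫ ξ, K z ξ * f ξ := rfl
    rw [this]
    refine continuous_of_dominated (bound := fun ξ => B * ‖f ξ‖)
      (fun z => (hKf z).aestronglyMeasurable) (fun z => ae_of_all _ fun ξ => ?_)
      (hf.norm.const_mul B) (ae_of_all _ fun ξ => (hKz ξ).mul continuous_const)
    rw [norm_mul]
    exact mul_le_mul_of_nonneg_right (hKB z ξ) (norm_nonneg _)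
  have hηi : Integrable η volume := η.integrable
  -- Fubini
  have hprod : Integrable (Function.uncurry fun (y : ℝ2) (ξ : ℝ) => η y * (K (x - y) ξ * f ξ))
      (volume.prod volume) := by
    refine ((hηi.norm.mul_prod hf.norm).const_mul B).mono' ?_ (ae_of_all _ fun q => ?_)
    · refine AEStronglyMeasurable.mul (η.continuous.comp continuous_fst).aestronglyMeasurable
        (AEStronglyMeasurable.mul ?_ hf.1.comp_snd)
      exact (hKc.comp (f := fun q : ℝ2 × ℝ => (x - q.1, q.2)) (by fun_prop)).aestronglyMeasurable
    · simp only [Function.uncurry, norm_mul]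
      have := hKB (x - q.1) q.2
      calc _ ≤ ‖η q.1‖ * (B * ‖f q.2‖) := by gcongr
        _ = _ := by ring
  have hsw : ∫ y, η y * Tlam φ a lam f (x - y) = ∫ ξ, (∫ y, η y * K (x - y) ξ) * f ξ := by
    calc ∫ y, η y * Tlam φ a lam f (x - y) = ∫ y, ∫ ξ, η y * (K (x - y) ξ * f ξ) := by
          refine integral_congr_ae (ae_of_all _ fun y => ?_)
          simp only [hT]
          rw [integral_const_mul]
      _ = ∫ ξ, ∫ y, η y * (K (x - y) ξ * f ξ) := integral_integral_swap hprod
      _ = _ := by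
          refine integral_congr_ae (ae_of_all _ fun ξ => ?_)
          simp only [← mul_assoc]
          rw [integral_mul_const]
  have hswi : Integrable fun ξ => (∫ y, η y * K (x - y) ξ) * f ξ := by
    refine hprod.integral_prod_right.congr (ae_of_all _ fun ξ => ?_)
    simp only [Function.uncurry, ← mul_assoc]
    rw [integral_mul_const]
  have herr : ‖(∫ y, η y * Tlam φ a lam f (x - y)) - Tlam φ a lam f x‖ ≤
      C * lam ^ (-(N : ℝ)) * ∫ ξ, ‖f ξ‖ := by
    rw [hsw, hT, ← integral_sub hswi (hKf x), ← integral_const_mul]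
    refine norm_integral_le_of_norm_le (hf.norm.const_mul _) (ae_of_all _ fun ξ => ?_)
    rw [← sub_mul, norm_mul]
    by_cases hξ : ξ ∈ Ioo (0 : ℝ) 1
    · exact mul_le_mul_of_nonneg_right (hC lam hlam ξ hξ x hx) (norm_nonneg _)
    · have : f ξ = 0 := by
        by_contra h0
        exact hξ (hfs h0)
      simp [this]
  have hmain : ‖∫ y, η y * Tlam φ a lam f (x - y)‖ₑ ≤ eLpNorm (Tlam φ a lam f) 1 μ := by
    rw [eLpNorm_one_eq_lintegral_enorm, hμ, lintegral_withDensity_eq_lintegral_mul _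
      (w.continuous.measurable.ennreal_ofReal) hTc.measurable.enorm]
    refine (enorm_integral_le_lintegral_enorm _).trans ?_
    rw [← lintegral_sub_left_eq_self _ x]
    refine lintegral_mono fun y => ?_
    simp only [sub_sub_cancel, enorm_mul, Pi.mul_apply]
    refine mul_le_mul_left ?_ _
    rw [← ofReal_norm]
    exact ENNReal.ofReal_le_ofReal (hw x hx y)
  have hLp := eLpNorm_le_eLpNorm_mul_rpow_measure_univ (μ := μ) hp
    (hTc.aestronglyMeasurable (μ := μ))
  have hI : 0 ≤ ∫ ξ, ‖f ξ‖ := integral_nonneg fun _ => norm_nonneg _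
  have hlN : 0 ≤ lam ^ (-(N : ℝ)) := by positivity
  calc ENNReal.ofReal ‖Tlam φ a lam f x‖
      ≤ ENNReal.ofReal (‖∫ y, η y * Tlam φ a lam f (x - y)‖ +
          (C + 1) * lam ^ (-(N : ℝ)) * ∫ ξ, ‖f ξ‖) := by
        refine ENNReal.ofReal_le_ofReal ?_
        have h1 := norm_sub_norm_le (Tlam φ a lam f x) (∫ y, η y * Tlam φ a lam f (x - y))
        rw [norm_sub_rev] at h1
        have h2 : 0 ≤ lam ^ (-(N : ℝ)) * ∫ ξ, ‖f ξ‖ := mul_nonneg hlN hI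
        linarith
    _ = ‖∫ y, η y * Tlam φ a lam f (x - y)‖ₑ +
          ENNReal.ofReal ((C + 1) * lam ^ (-(N : ℝ)) * ∫ ξ, ‖f ξ‖) := by
        rw [ENNReal.ofReal_add (norm_nonneg _) (by positivity), ofReal_norm]
    _ ≤ _ := by
        refine add_le_add ((hmain.trans hLp).trans ?_) le_rfl
        rw [mul_comm]
        refine mul_le_mul_left ?_ _
        rw [← hcc]
        exact ENNReal.le_ofReal_iff_toReal_le hcfin (by positivity) |>.2 (by linarith)
end
end

section
/- Let 0 < β < α ≤ 2 and q > 0. Suppose that for every ε > 0 there is a constant C_ε such that for all λ ≥ 1, all 1 ≤ R ≤ λ, all f ∈ L²(ℝ), and every β-dimensional weight H on ℝ²: ∫_{B(0,R)} |T^λ f(x)|^q H(x) dx ≤ C_ε A_β(H) R^ε ‖f‖_{L²}^q. Then for every ε > 0 there is a constant C′_ε such that for all λ ≥ 1, all 1 ≤ R ≤ λ, all f ∈ L²(ℝ), and every α-dimensional weight H on ℝ²: ∫_{B(0,R)} |T^λ f(x)|^{αq/β} H(x) dx ≤ C′_ε A_α(H) R^ε ‖f‖_{L²}^{αq/β}.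 -/
open MeasureTheory Metric Set

noncomputable section

lemma amp_bound_s11 {Npar : ℕ} {cpar : ℝ} {Cab : ℕ → ℝ} {a φ : ℝ2 → ℝ → ℝ} {h : ℝ → ℝ}
    {E : ℝ2 → ℝ → ℝ} (hr : IsReducedForm Npar cpar Cab a φ h E) :
    ∃ B : ℝ, 0 < B ∧ ∀ x ξ, |a x ξ| ≤ B := by
  have hK : IsCompact ((closedBall (0 : ℝ2) 1) ×ˢ (Icc (0 : ℝ) 1)) :=
    (isCompact_closedBall _ _).prod isCompact_Icc
  obtain ⟨B, hB⟩ := hK.exists_bound_of_continuousOn hr.a_smooth.continuous.continuousOn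
  refine ⟨max B 1, by positivity, fun x ξ => ?_⟩
  by_cases h0 : a x ξ = 0
  · rw [h0, abs_zero]; positivity
  · obtain ⟨h1, h2⟩ := hr.a_supp x ξ h0
    have := hB (x, ξ) ⟨by simpa using h1.le, ⟨h2.1.le, h2.2.le⟩⟩
    exact (this.trans (le_max_left _ _))

lemma Tlam_bound {Npar : ℕ} {cpar : ℝ} {Cab : ℕ → ℝ} {a φ : ℝ2 → ℝ → ℝ} {h : ℝ → ℝ}
    {E : ℝ2 → ℝ → ℝ} (hr : IsReducedForm Npar cpar Cab a φ h E) (lam : ℝ)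
    (f : ℝ → ℂ) (hf : MemLp f 2 volume) :
    Continuous (Tlam φ a lam f) ∧ ∃ M : ℝ, 0 < M ∧ ∀ x, ‖Tlam φ a lam f x‖ ≤ M := by
  obtain ⟨B, hB0, hB⟩ := amp_bound_s11 hr
  set bd : ℝ → ℝ := fun ξ => (Icc (0 : ℝ) 1).indicator (fun ξ => B * ‖f ξ‖) ξ with hbd
  have hint : Integrable bd := by
    rw [hbd, integrable_indicator_iff measurableSet_Icc]
    have h1 : MemLp f 2 (volume.restrict (Icc (0 : ℝ) 1)) := hf.restrict _
    have h2 : Integrable f (volume.restrict (Icc (0 : ℝ) 1)) :=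
      h1.integrable (by norm_num)
    exact h2.norm.const_mul B
  have hca : Continuous fun p : ℝ2 × ℝ => a p.1 p.2 := hr.a_smooth.continuous
  have hcp : Continuous fun p : ℝ2 × ℝ => φ p.1 p.2 := hr.φ_smooth.continuous
  have hle : ∀ x ξ, ‖Complex.exp (Complex.I * ((lam * φ (lam⁻¹ • x) ξ : ℝ) : ℂ)) *
    ((a (lam⁻¹ • x) ξ : ℝ) : ℂ) * f ξ‖ ≤ bd ξ := by
    intro x ξ
    rw [norm_mul, norm_mul, mul_comm Complex.I, Complex.norm_exp_ofReal_mul_I, one_mul,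
      Complex.norm_real, Real.norm_eq_abs]
    by_cases h0 : a (lam⁻¹ • x) ξ = 0
    · rw [h0, abs_zero, zero_mul]
      exact indicator_nonneg (fun _ _ => by positivity) _
    · have h2 := (hr.a_supp _ ξ h0).2
      rw [hbd]
      simp only
      rw [indicator_of_mem (show ξ ∈ Icc (0 : ℝ) 1 from ⟨h2.1.le, h2.2.le⟩)]
      exact mul_le_mul_of_nonneg_right (hB _ _) (norm_nonneg _)
  have hcx : ∀ ξ, Continuous fun x : ℝ2 =>
      Complex.exp (Complex.I * ((lam * φ (lam⁻¹ • x) ξ : ℝ) : ℂ)) *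
        ((a (lam⁻¹ • x) ξ : ℝ) : ℂ) := by
    intro ξ
    have e1 : Continuous fun x : ℝ2 => φ (lam⁻¹ • x) ξ :=
      hcp.comp (by fun_prop : Continuous fun x : ℝ2 => ((lam⁻¹ • x, ξ) : ℝ2 × ℝ))
    have e2 : Continuous fun x : ℝ2 => a (lam⁻¹ • x) ξ :=
      hca.comp (by fun_prop : Continuous fun x : ℝ2 => ((lam⁻¹ • x, ξ) : ℝ2 × ℝ))
    fun_prop
  have hcξ : ∀ x : ℝ2, Continuous fun ξ : ℝ =>
      Complex.exp (Complex.I * ((lam * φ (lam⁻¹ • x) ξ : ℝ) : ℂ)) *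
        ((a (lam⁻¹ • x) ξ : ℝ) : ℂ) := by
    intro x
    have e1 : Continuous fun ξ : ℝ => φ (lam⁻¹ • x) ξ :=
      hcp.comp (by fun_prop : Continuous fun ξ : ℝ => ((lam⁻¹ • x, ξ) : ℝ2 × ℝ))
    have e2 : Continuous fun ξ : ℝ => a (lam⁻¹ • x) ξ :=
      hca.comp (by fun_prop : Continuous fun ξ : ℝ => ((lam⁻¹ • x, ξ) : ℝ2 × ℝ))
    fun_prop
  constructor
  · refine continuous_of_dominated (bound := bd) ?_ ?_ hint ?_
    · intro x
      exact (hcξ x).aestronglyMeasurable.mul hf.1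
    · exact fun x => Filter.Eventually.of_forall (hle x)
    · exact Filter.Eventually.of_forall fun ξ => (hcx ξ).mul continuous_const
  · refine ⟨max (∫ ξ, bd ξ) 1, by positivity, fun x => ?_⟩
    exact (norm_integral_le_of_norm_le hint (Filter.Eventually.of_forall (hle x))).trans
      (le_max_left _ _)

/-- Integrability on a ball of bounded measurable functions. -/
lemma integrableOn_ball_of_bdd (u : ℝ2 → ℝ) (hu : Measurable u) (M : ℝ)
    (hM : ∀ x, |u x| ≤ M) (x₀ : ℝ2) (r : ℝ) : IntegrableOn u (ball x₀ r) :=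
  Measure.integrableOn_of_bounded measure_ball_lt_top.ne hu.aestronglyMeasurable
    (Filter.Eventually.of_forall hM)

/-- Hölder on balls. -/
lemma holder_ball (G H : ℝ2 → ℝ) (hG : Measurable G) (hH : Measurable H) (M : ℝ)
    (hG0 : ∀ x, 0 ≤ G x) (hGM : ∀ x, G x ≤ M) (hH0 : ∀ x, 0 ≤ H x) (hH1 : ∀ x, H x ≤ 1)
    (θ : ℝ) (h0 : 0 < θ) (h1 : θ < 1) (x₀ : ℝ2) (r : ℝ) :
    ∫ x in ball x₀ r, G x ^ (1 - θ) * H x ^ θ ≤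
      (∫ x in ball x₀ r, G x) ^ (1 - θ) * (∫ x in ball x₀ r, H x) ^ θ := by
  have h1' : 0 < 1 - θ := by linarith
  have : IsFiniteMeasure (volume.restrict (ball x₀ r)) :=
    ⟨by rw [Measure.restrict_apply_univ]; exact measure_ball_lt_top⟩
  have hpq : (1 / (1 - θ)).HolderConjugate (1 / θ) := by
    rw [Real.holderConjugate_iff]
    refine ⟨by rw [lt_div_iff₀ h1']; linarith, by simp⟩
  have key := integral_mul_le_Lp_mul_Lq_of_nonneg (μ := volume.restrict (ball x₀ r)) hpq
    (f := fun x => G x ^ (1 - θ)) (g := fun x => H x ^ θ)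
    (Filter.Eventually.of_forall fun x => Real.rpow_nonneg (hG0 x) _)
    (Filter.Eventually.of_forall fun x => Real.rpow_nonneg (hH0 x) _)
    (MemLp.of_bound (hG.pow_const _).aestronglyMeasurable (M ^ (1 - θ))
      (Filter.Eventually.of_forall fun x => by
        rw [Real.norm_of_nonneg (Real.rpow_nonneg (hG0 x) _)]
        exact Real.rpow_le_rpow (hG0 x) (hGM x) h1'.le))
    (MemLp.of_bound (hH.pow_const _).aestronglyMeasurable 1
      (Filter.Eventually.of_forall fun x => by
        rw [Real.norm_of_nonneg (Real.rpow_nonneg (hH0 x) _)]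
        exact Real.rpow_le_one (hH0 x) (hH1 x) h0.le))
  have e1 : ∀ x, (G x ^ (1 - θ)) ^ (1 / (1 - θ)) = G x := fun x => by
    rw [← Real.rpow_mul (hG0 x), mul_one_div_cancel h1'.ne', Real.rpow_one]
  have e2 : ∀ x, (H x ^ θ) ^ (1 / θ) = H x := fun x => by
    rw [← Real.rpow_mul (hH0 x), mul_one_div_cancel h0.ne', Real.rpow_one]
  simpa only [e1, e2, one_div_one_div] using key

/-- the bootstrapping step in the proof of Proposition 2.3, after
Shayya: if a weighted estimate with exponent `q` holds for all `β`-dimensional weights,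
then the corresponding estimate with exponent `αq/β` holds for all `α`-dimensional
weights, for `0 < β < α ≤ 2`. -/
theorem weighted_estimate_bootstrap :
    ∃ N₀ : ℕ, ∃ c₀ : ℝ, 0 < c₀ ∧
      ∀ Npar : ℕ, N₀ ≤ Npar → ∀ cpar : ℝ, 0 < cpar → cpar ≤ c₀ →
      ∀ (Cab : ℕ → ℝ) (a φ : ℝ2 → ℝ → ℝ) (h : ℝ → ℝ) (E : ℝ2 → ℝ → ℝ),
        IsReducedForm Npar cpar Cab a φ h E →
      ∀ α β : ℝ, 0 < β → β < α → α ≤ 2 →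
      ∀ q : ℝ, 0 < q →
      -- the hypothesis: the weighted estimate with exponent q for β-dimensional weights
      (∀ ε : ℝ, 0 < ε → ∃ Cε : ℝ, 0 < Cε ∧
        ∀ A : ℝ, 0 ≤ A → ∀ H : ℝ2 → ℝ, IsWeight β A H →
        ∀ lam R : ℝ, 1 ≤ lam → 1 ≤ R → R ≤ lam →
        ∀ f : ℝ → ℂ, MemLp f 2 volume →
          (∫ x in Metric.ball (0 : ℝ2) R, ‖Tlam φ a lam f x‖ ^ q * H x) ≤
            Cε * A * R ^ ε * ((∫ ξ : ℝ, ‖f ξ‖ ^ 2) ^ ((1 : ℝ) / 2)) ^ q) →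
      -- the conclusion: the estimate with exponent αq/β for α-dimensional weights
      ∀ ε : ℝ, 0 < ε → ∃ Cε' : ℝ, 0 < Cε' ∧
        ∀ A : ℝ, 0 ≤ A → ∀ H : ℝ2 → ℝ, IsWeight α A H →
        ∀ lam R : ℝ, 1 ≤ lam → 1 ≤ R → R ≤ lam →
        ∀ f : ℝ → ℂ, MemLp f 2 volume →
          (∫ x in Metric.ball (0 : ℝ2) R, ‖Tlam φ a lam f x‖ ^ (α * q / β) * H x) ≤
            Cε' * A * R ^ ε * ((∫ ξ : ℝ, ‖f ξ‖ ^ 2) ^ ((1 : ℝ) / 2)) ^ (α * q / β) := by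
  refine ⟨0, 1, one_pos, ?_⟩
  intro Npar _ cpar _ _ Cab a φ h E hr α β hβ hβα hα2 q hq hyp ε hε
  have hα : 0 < α := hβ.trans hβα
  set θ : ℝ := β / α with hθ
  have hθ0 : 0 < θ := div_pos hβ hα
  have hθ1 : θ < 1 := (div_lt_one hα).2 hβα
  have hθi : 0 < 1 / θ := by positivity
  obtain ⟨C, hC, hyp⟩ := hyp (ε * θ) (by positivity)
  refine ⟨C ^ (1 / θ), by positivity, ?_⟩
  intro A hA H hH lam R hlam hR hRlam f hf
  obtain ⟨hHm, hH01, hHb⟩ := hH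
  obtain ⟨hTc, M, hM, hTM⟩ := Tlam_bound hr lam f hf
  set p : ℝ := α * q / β with hp
  have hpθ : p * θ = q := by rw [hp, hθ]; field_simp
  have hp0 : 0 < p := by rw [hp]; positivity
  have hpq : p - q = p * (1 - θ) := by rw [← hpθ]; ring
  have hpq0 : 0 < p - q := by rw [hpq]; exact mul_pos hp0 (by linarith)
  set F : ℝ2 → ℝ := fun x => ‖Tlam φ a lam f x‖ with hF
  have hF0 : ∀ x, 0 ≤ F x := fun x => norm_nonneg _
  have hFm : Measurable F := hTc.norm.measurable
  set L : ℝ := (∫ ξ : ℝ, ‖f ξ‖ ^ 2) ^ ((1 : ℝ) / 2) with hL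
  have hL0 : 0 ≤ L := Real.rpow_nonneg (integral_nonneg fun _ => by positivity) _
  set I : ℝ := ∫ x in ball (0 : ℝ2) R, F x ^ p * H x with hI
  have hI0 : 0 ≤ I := integral_nonneg fun x =>
    mul_nonneg (Real.rpow_nonneg (hF0 x) _) (hH01 x).1
  set N : ℝ := M ^ (p - q) with hN
  have hN0 : 0 < N := by positivity
  -- the truncated density
  set G : ℝ2 → ℝ := (ball (0 : ℝ2) R).indicator fun x => F x ^ p * H x with hG
  have hGm : Measurable G := ((hFm.pow_const _).mul hHm).indicator measurableSet_ball
  have hGpos : ∀ x, 0 ≤ F x ^ p * H x := fun x =>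
    mul_nonneg (Real.rpow_nonneg (hF0 x) _) (hH01 x).1
  have hG0 : ∀ x, 0 ≤ G x := fun x => indicator_nonneg (fun x _ => hGpos x) x
  have hFHM : ∀ x, F x ^ p * H x ≤ M ^ p := fun x => by
    have := mul_le_mul (Real.rpow_le_rpow (hF0 x) (hTM x) hp0.le) (hH01 x).2 (hH01 x).1
      (by positivity)
    simpa using this
  have hGM : ∀ x, G x ≤ M ^ p := fun x =>
    (indicator_le_self' (fun x _ => hGpos x) x).trans (hFHM x)
  have hGI : ∫ x, G x = I := by rw [hG, integral_indicator measurableSet_ball]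
  have hGint : Integrable G := by
    rw [hG, integrable_indicator_iff measurableSet_ball]
    refine integrableOn_ball_of_bdd _ ((hFm.pow_const _).mul hHm) (M ^ p) (fun x => ?_) _ _
    change |F x ^ p * H x| ≤ M ^ p
    rw [abs_of_nonneg (hGpos x)]
    exact hFHM x
  set H₁ : ℝ2 → ℝ := fun x => N⁻¹ * (G x ^ (1 - θ) * H x ^ θ) with hH₁
  have hprod : ∀ x ∈ ball (0 : ℝ2) R, G x ^ (1 - θ) * H x ^ θ = F x ^ (p - q) * H x := by
    intro x hx
    rw [hG, indicator_of_mem hx, Real.mul_rpow (Real.rpow_nonneg (hF0 x) _) (hH01 x).1,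
      ← Real.rpow_mul (hF0 x), ← hpq, mul_assoc,
      ← Real.rpow_add_of_nonneg (hH01 x).1 (by linarith) hθ0.le]
    simp
  have hW : IsWeight β (N⁻¹ * (I ^ (1 - θ) * A ^ θ)) H₁ := by
    refine ⟨((hGm.pow_const _).mul (hHm.pow_const _)).const_mul _, fun x => ⟨?_, ?_⟩, ?_⟩
    · have := hG0 x
      have := (hH01 x).1
      positivity
    · by_cases hx : x ∈ ball (0 : ℝ2) R
      · rw [hH₁]
        simp only
        rw [hprod x hx, inv_mul_le_iff₀ hN0]
        exact mul_le_mul (Real.rpow_le_rpow (hF0 x) (hTM x) hpq0.le) (hH01 x).2 (hH01 x).1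
          hN0.le
      · have : G x = 0 := indicator_of_notMem hx _
        rw [hH₁]
        simp only
        rw [this, Real.zero_rpow (by linarith)]
        simp
    · intro x₀ r hr1
      have hr0 : 0 ≤ r := by linarith
      rw [hH₁, integral_const_mul, mul_assoc]
      refine mul_le_mul_of_nonneg_left ?_ (by positivity)
      refine (holder_ball G H hGm hHm (M ^ p) hG0 hGM (fun x => (hH01 x).1)
        (fun x => (hH01 x).2) θ hθ0 hθ1 x₀ r).trans ?_
      rw [mul_assoc]
      have e : A ^ θ * r ^ β = (A * r ^ α) ^ θ := by
        rw [Real.mul_rpow hA (Real.rpow_nonneg hr0 _), ← Real.rpow_mul hr0, hθ,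
          mul_div_cancel₀ _ hα.ne']
      rw [e]
      refine mul_le_mul (Real.rpow_le_rpow (integral_nonneg hG0) ?_ (by linarith))
        (Real.rpow_le_rpow (integral_nonneg fun x => (hH01 x).1) (hHb x₀ r hr1) hθ0.le)
        (Real.rpow_nonneg (integral_nonneg fun x => (hH01 x).1) _) (Real.rpow_nonneg hI0 _)
      rw [← hGI]
      exact setIntegral_le_integral hGint (Filter.Eventually.of_forall hG0)
  have main := hyp _ (by positivity) H₁ hW lam R hlam hR hRlam f hf
  have hlhs : (∫ x in ball (0 : ℝ2) R, ‖Tlam φ a lam f x‖ ^ q * H₁ x) = N⁻¹ * I := by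
    rw [hI, ← integral_const_mul]
    refine setIntegral_congr_fun measurableSet_ball fun x hx => ?_
    have e : F x ^ p = F x ^ q * F x ^ (p - q) := by
      rw [← Real.rpow_add_of_nonneg (hF0 x) hq.le hpq0.le]; ring_nf
    simp only [hH₁]
    rw [hprod x hx, e]
    ring
  rw [hlhs] at main
  have hR0 : 0 ≤ R := by linarith
  have main2 : I ≤ I ^ (1 - θ) * (C * A ^ θ * R ^ (ε * θ) * L ^ q) := by
    have : N⁻¹ * I ≤ N⁻¹ * (I ^ (1 - θ) * (C * A ^ θ * R ^ (ε * θ) * L ^ q)) := by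
      refine main.trans (le_of_eq ?_)
      ring
    exact le_of_mul_le_mul_left this (by positivity)
  rcases hI0.eq_or_lt with h0 | hIpos
  · rw [← h0]; positivity
  have main3 : I ^ θ ≤ C * A ^ θ * R ^ (ε * θ) * L ^ q := by
    have e : I = I ^ (1 - θ) * I ^ θ := by
      rw [← Real.rpow_add hIpos]; simp
    have hpos : 0 < I ^ (1 - θ) := by positivity
    refine le_of_mul_le_mul_left ?_ hpos
    rw [← e]
    exact main2
  have main4 := Real.rpow_le_rpow (by positivity) main3 hθi.le
  have c1 : ∀ y : ℝ, 0 ≤ y → (y ^ θ) ^ (1 / θ) = y := fun y hy => by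
    rw [← Real.rpow_mul hy, mul_one_div_cancel hθ0.ne', Real.rpow_one]
  rw [c1 I hI0, Real.mul_rpow (by positivity) (by positivity),
    Real.mul_rpow (by positivity) (by positivity), Real.mul_rpow (by positivity) (by positivity),
    c1 A hA, ← hpθ, Real.rpow_mul hR0, Real.rpow_mul hL0, c1 _ (by positivity),
    c1 _ (by positivity)] at main4
  exact main4
end
end
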